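/- Let Q ∈ 𝓛(X) be an idempotent that is neither 0 nor I. Then the conjugation orbit {W∘Q∘W⁻¹ : W an invertible element of 𝓛(X)} is a clopen subset of 𝓘(X) (with the norm topology). -/

import Mathlib

/-!
For idempotents `p` and `q`, the element `u = q * p + (1 - q) * (1 - p)` satisfies `u * p = q * u`,
and `u = 1` when `q = p`. Invertibility is an open condition, so `u` is a unit for `q` near `p`, and
such a `q` is conjugate to `p`. The conjugacy class is thus a locally constant function of the
idempotent, and its fibers are clopen.
-/

open Topology

section Monoid

variable {M : Type*} [Monoid M]

theorem isConj_iff_exists_units_mul_inv_eq {a b : M} :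
    IsConj a b ↔ ∃ c : Mˣ, (c : M) * a * (c⁻¹ : Mˣ) = b :=
  exists_congr fun c ↦ (Units.mul_inv_eq_iff_eq_mul c).symm

end Monoid

section Ring

variable {R : Type*} [Ring R] {p q : R}

/-- The canonical element intertwining two idempotents `p` and `q`. On a module acted on by `R`, it
maps the range of `p` to that of `q` by `q`, and the kernel of `p` to that of `q` by `1 - q`. -/
def idempotentIntertwiner (p q : R) : R :=
  q * p + (1 - q) * (1 - p)

theorem idempotentIntertwiner_self (hp : IsIdempotentElem p) : idempotentIntertwiner p p = 1 := by
  rw [idempotentIntertwiner, hp.eq, hp.one_sub.eq, add_sub_cancel]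

theorem semiconjBy_idempotentIntertwiner (hp : IsIdempotentElem p) (hq : IsIdempotentElem q) :
    SemiconjBy (idempotentIntertwiner p q) p q :=
  calc idempotentIntertwiner p q * p
    _ = q * p := by
      rw [idempotentIntertwiner, add_mul, mul_assoc, mul_assoc, hp.eq, hp.one_sub_mul_self,
        mul_zero, add_zero]
    _ = q * idempotentIntertwiner p q := by
      rw [idempotentIntertwiner, mul_add, ← mul_assoc, ← mul_assoc, hq.eq, hq.mul_one_sub_self,
        zero_mul, add_zero]

end Ring

section TopologicalRing

variable {R : Type*} [Ring R] [TopologicalSpace R] [IsTopologicalRing R]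

theorem continuous_idempotentIntertwiner (p : R) : Continuous (idempotentIntertwiner p) := by
  unfold idempotentIntertwiner
  fun_prop

theorem eventually_isConj_of_isIdempotentElem (hunit : ∀ᶠ u : R in 𝓝 1, IsUnit u) {p : R}
    (hp : IsIdempotentElem p) : ∀ᶠ q in 𝓝 p, IsIdempotentElem q → IsConj p q := by
  have tendsto_one : Filter.Tendsto (idempotentIntertwiner p) (𝓝 p) (𝓝 1) :=
    (continuous_idempotentIntertwiner p).tendsto' p 1 (idempotentIntertwiner_self hp)
  filter_upwards [tendsto_one.eventually hunit] with q ⟨u, hu⟩ hq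
  exact ⟨u, hu ▸ semiconjBy_idempotentIntertwiner hp hq⟩

theorem isLocallyConstant_conjClasses_mk (hunit : ∀ᶠ u : R in 𝓝 1, IsUnit u) {s : Set R}
    (hs : ∀ p ∈ s, IsIdempotentElem p) : IsLocallyConstant fun p : s ↦ ConjClasses.mk (p : R) := by
  refine (IsLocallyConstant.iff_eventually_eq _).2 fun p ↦ ?_
  have near_p := eventually_isConj_of_isIdempotentElem hunit (hs p p.2)
  filter_upwards [continuous_subtype_val.continuousAt.eventually near_p] with q hq
  exact ConjClasses.mk_eq_mk_iff_isConj.2 (hq (hs q q.2)).symm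

theorem stmt_11_general (hunit : ∀ᶠ u : R in 𝓝 1, IsUnit u) {s : Set R}
    (hs : ∀ p ∈ s, IsIdempotentElem p) (a : R) :
    IsClopen {p : s | ∃ w : Rˣ, (w : R) * a * (w⁻¹ : Rˣ) = p} := by
  simpa only [ConjClasses.mk_eq_mk_iff_isConj, isConj_comm (h := a),
    isConj_iff_exists_units_mul_inv_eq] using
    (isLocallyConstant_conjClasses_mk hunit hs).isClopen_fiber (ConjClasses.mk a)

end TopologicalRing

/-- Let `Q ∈ 𝓛(X)` be an idempotent that is neither `0` nor `I`. Then the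
conjugation orbit `{W∘Q∘W⁻¹ : W invertible}` is a clopen subset of `𝓘(X)` (the set of
nontrivial idempotents with the norm topology). -/
theorem stmt_11 {𝕜 : Type*} [RCLike 𝕜] {X : Type*} [NormedAddCommGroup X]
    [NormedSpace 𝕜 X] [CompleteSpace X]
    (Q : X →L[𝕜] X) (hQ : Q ∘L Q = Q) (hQ0 : Q ≠ 0) (hQ1 : Q ≠ 1) :
    IsClopen {A : {A : X →L[𝕜] X // A ∘L A = A ∧ A ≠ 0 ∧ A ≠ 1} |
      ∃ W : (X →L[𝕜] X)ˣ,
        (W : X →L[𝕜] X) * Q * ((W⁻¹ : (X →L[𝕜] X)ˣ) : X →L[𝕜] X) = (A : X →L[𝕜] X)} := by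
  exact stmt_11_general (Units.nhds 1) (fun _ hA ↦ hA.1) Q
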